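/- Let p be a prime with p ≡ 3 (mod 4). Then ∑_{0<n<p/2} χ_p(n) = (√p/π)·(2 - χ_p(2))·L(1, χ̃_p), where the sum runs over all integers n with 0 < n < p/2 (an identity in ℂ after casting the integer left-hand side; both sides are in fact real). -/

import Mathlib

section

open Complex Filter Topology Set MeasureTheory HurwitzZeta

lemma qe_re_pos {w : ℂ} (hre : w.re < 1) {t : ℝ} (ht : 0 ≤ t) :
    0 < (1 - w * Real.exp (-t)).re := by
  have h1 : Real.exp (-t) ≤ 1 := by simpa using ht
  have h0 := Real.exp_pos (-t)
  simp only [sub_re, one_re, mul_re, ofReal_re, ofReal_im, mul_zero, sub_zero]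
  rcases le_or_gt w.re 0 with h | h <;> nlinarith

lemma qe_mellin {w : ℂ} (hre : w.re < 1) :
    DifferentiableAt ℂ (mellin (fun t : ℝ => w * Real.exp (-t) / (1 - w * Real.exp (-t)))) 1 ∧
    mellin (fun t : ℝ => w * Real.exp (-t) / (1 - w * Real.exp (-t))) 1 = - log (1 - w) := by
  set F : ℝ → ℂ := fun t : ℝ => w * Real.exp (-t) / (1 - w * Real.exp (-t)) with hF
  have hne : ∀ t : ℝ, 0 ≤ t → (1 - w * Real.exp (-t)) ≠ 0 := fun t ht h => by
    have := qe_re_pos hre ht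
    rw [h] at this; simp at this
  have hcont : ContinuousOn F (Ici 0) := by
    apply ContinuousOn.div (by fun_prop) (by fun_prop)
    exact fun t ht => hne t ht
  have hloc : LocallyIntegrableOn F (Ioi 0) :=
    (hcont.mono Ioi_subset_Ici_self).locallyIntegrableOn measurableSet_Ioi
  have htop0 : Tendsto (fun t : ℝ => (1 - w * (Real.exp (-t) : ℂ))) atTop (𝓝 1) := by
    have : Tendsto (fun t : ℝ => ((Real.exp (-t) : ℝ) : ℂ)) atTop (𝓝 ((0:ℝ):ℂ)) :=
      (continuous_ofReal.tendsto _).comp Real.tendsto_exp_neg_atTop_nhds_zero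
    simpa using (this.const_mul w).const_sub 1
  have htop : F =O[atTop] fun t => Real.exp (-1 * t) := by
    have h1 : (fun t : ℝ => w / (1 - w * (Real.exp (-t) : ℂ))) =O[atTop] (fun _ => (1:ℝ)) :=
      ((tendsto_const_nhds (x := w)).div htop0 one_ne_zero).isBigO_one ℝ
    have h2 : (fun t : ℝ => ((Real.exp (-t) : ℝ) : ℂ)) =O[atTop] fun t => Real.exp (-1 * t) := by
      apply Asymptotics.IsBigO.of_bound 1
      filter_upwards with t
      rw [norm_real, Real.norm_eq_abs, Real.norm_eq_abs]
      simp
    refine (h1.mul h2).congr (fun t => ?_) (fun t => ?_)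
    · simp only [hF]; ring
    · simp
  have hbot : F =O[𝓝[>] 0] (fun t : ℝ => t ^ (-(0:ℝ))) := by
    have : Tendsto F (𝓝[>] 0) (𝓝 (F 0)) :=
      ((hcont 0 self_mem_Ici).mono Ioi_subset_Ici_self)
    simpa using this.isBigO_one ℝ
  refine ⟨mellin_differentiableAt_of_isBigO_rpow_exp one_pos hloc htop hbot (by simp), ?_⟩
  have hconv : MellinConvergent F 1 :=
    mellinConvergent_of_isBigO_rpow_exp one_pos hloc htop hbot (by simp)
  have hint : IntegrableOn F (Ioi 0) := by
    simpa [MellinConvergent] using hconv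
  have : mellin F 1 = ∫ t in Ioi (0:ℝ), F t := by simp [mellin]
  rw [this, integral_Ioi_of_hasDerivAt_of_tendsto' (f := fun t : ℝ => log (1 - w * Real.exp (-t)))
    (m := 0) _ hint]
  · simp
  · have := (continuousAt_clog (x := 1) (by simp)).tendsto.comp htop0
    simpa [Function.comp_def] using this
  · intro t ht
    have h1 : HasDerivAt (fun t : ℝ => ((Real.exp (-t) : ℝ) : ℂ)) ((-Real.exp (-t) : ℝ) : ℂ) t := by
      apply HasDerivAt.ofReal_comp
      simpa using (hasDerivAt_neg t).exp
    have h2 := ((h1.const_mul w).const_sub 1).clog_real (Or.inl (qe_re_pos hre ht))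
    refine h2.congr_deriv ?_
    simp only [hF]
    push_cast
    ring

lemma qe_exp_re {x : ℝ} (h0 : 0 < x) (h1 : x < 1) : (cexp (2 * Real.pi * I * x)).re < 1 := by
  have : (2 * Real.pi * I * x : ℂ) = ((2 * (Real.pi * x) : ℝ) : ℂ) * I := by push_cast; ring
  rw [this, exp_ofReal_mul_I_re, Real.cos_two_mul, Real.cos_sq']
  have : 0 < Real.sin (Real.pi * x) := Real.sin_pos_of_pos_of_lt_pi (by positivity)
    (by nlinarith [Real.pi_pos])
  nlinarith

lemma qe_exp_norm (x : ℝ) : ‖cexp (2 * Real.pi * I * x)‖ = 1 := by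
  have : (2 * Real.pi * I * x : ℂ) = ((2 * (Real.pi * x) : ℝ) : ℂ) * I := by push_cast; ring
  rw [this, norm_exp_ofReal_mul_I]

lemma qe_expZeta_one {x : ℝ} (h0 : 0 < x) (h1 : x < 1) :
    expZeta (x : UnitAddCircle) 1 = - log (1 - cexp (2 * Real.pi * I * x)) := by
  set w := cexp (2 * Real.pi * I * x) with hw
  obtain ⟨hd, hv⟩ := qe_mellin (qe_exp_re h0 h1)
  rw [← hw] at hd hv
  rw [← hv]
  set F : ℝ → ℂ := fun t : ℝ => w * Real.exp (-t) / (1 - w * Real.exp (-t)) with hF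
  have hx : (x : UnitAddCircle) ≠ 0 := by
    intro h
    obtain ⟨n, hn⟩ := (AddCircle.coe_eq_zero_iff 1).1 h
    simp at hn
    rw [← hn] at h0 h1
    norm_cast at h0 h1
    omega
  have key : ∀ s : ℝ, 1 < s → Gamma s * expZeta (x : UnitAddCircle) s = mellin F s := by
    intro s hs
    have e1 := hasSum_mellin (a := fun n : ℕ => w ^ (n+1)) (p := fun n : ℕ => ((n:ℝ)+1)) (F := F)
      (s := (s:ℂ)) (fun n => Or.inr (by positivity)) (by simp; linarith) (by
        intro t ht
        have hlt : ‖w * Real.exp (-t)‖ < 1 := by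
          rw [norm_mul, hw, qe_exp_norm, one_mul, norm_real, Real.norm_eq_abs, Real.abs_exp]
          simpa using ht
        have := (hasSum_geometric_of_norm_lt_one hlt).mul_left (w * Real.exp (-t))
        rw [← div_eq_mul_inv] at this
        refine this.congr_fun (fun n => ?_)
        have : Real.exp (-((n:ℝ)+1) * t) = Real.exp (-t) ^ (n+1) := by
          rw [← Real.exp_nat_mul]; push_cast; ring_nf
        rw [this]; push_cast; ring) (by
        have := (summable_nat_add_iff 1).2 (Real.summable_one_div_nat_rpow.2 hs)
        simpa [hw, qe_exp_norm] using this)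
    have e2 := ((hasSum_nat_add_iff' 1).2
      (hasSum_expZeta_of_one_lt_re x (s := s) (by simpa using hs))).mul_left (Gamma s)
    have hs0 : (s:ℂ) ≠ 0 := by
      have : s ≠ 0 := by linarith
      exact_mod_cast this
    simp only [Finset.sum_range_one, Nat.cast_zero, mul_zero, zero_cpow hs0, div_zero, sub_zero] at e2
    refine e2.unique ?_
    refine e1.congr_fun (fun n => ?_)
    rw [hw, ← Complex.exp_nat_mul]
    push_cast
    ring_nf
  have l1 : Tendsto (fun s : ℝ => Gamma s * expZeta (x : UnitAddCircle) s) (𝓝[>] 1)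
      (𝓝 (Gamma (1:ℝ) * expZeta (x : UnitAddCircle) (1:ℝ))) := by
    have c : ContinuousAt (fun s : ℂ => Gamma s * expZeta (x : UnitAddCircle) s) ((1:ℝ):ℂ) := by
      apply ContinuousAt.mul
      · exact (differentiableAt_Gamma _ (fun m h => by
          have := congrArg re h
          simp at this
          have h2 : (0:ℝ) ≤ m := by positivity
          linarith)).continuousAt
      · exact (differentiable_expZeta_of_ne_zero hx _).continuousAt
    exact (c.comp (f := fun s : ℝ => (s:ℂ)) continuous_ofReal.continuousAt).tendsto.mono_left nhdsWithin_le_nhds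
  have l2 : Tendsto (fun s : ℝ => mellin F s) (𝓝[>] 1) (𝓝 (mellin F (1:ℝ))) := by
    have c : ContinuousAt (mellin F) ((1:ℝ):ℂ) := by simpa using hd.continuousAt
    exact (c.comp (f := fun s : ℝ => (s:ℂ)) continuous_ofReal.continuousAt).tendsto.mono_left nhdsWithin_le_nhds
  have l3 := l1.congr' (f₂ := fun s : ℝ => mellin F s) (by
    filter_upwards [self_mem_nhdsWithin] with s hs using key s hs)
  have := tendsto_nhds_unique l3 l2
  simpa using this

lemma qe_expZeta_sub {x : ℝ} (h0 : 0 < x) (h1 : x < 1) :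
    expZeta (x : UnitAddCircle) 1 - expZeta (-(x : UnitAddCircle)) 1
      = 2 * Real.pi * I * (1 / 2 - x) := by
  have e : (-(x : UnitAddCircle)) = ((1 - x : ℝ) : UnitAddCircle) := by
    rw [AddCircle.coe_sub, AddCircle.coe_period, zero_sub]
  rw [e, qe_expZeta_one h0 h1, qe_expZeta_one (by linarith) (by linarith)]
  have e2 : cexp (2 * Real.pi * I * ((1 - x : ℝ):ℂ)) = (starRingEnd ℂ) (cexp (2 * Real.pi * I * x)) := by
    rw [← exp_conj]
    have : (2 * Real.pi * I * ((1 - x : ℝ):ℂ)) = -(2 * Real.pi * I * x) + 2 * Real.pi * I := by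
      push_cast; ring
    rw [this, exp_add, exp_two_pi_mul_I, mul_one]
    congr 1
    simp [conj_ofNat]
  have hpos := qe_re_pos (qe_exp_re h0 h1) le_rfl
  simp only [neg_zero, Real.exp_zero, ofReal_one, mul_one] at hpos
  have harg : (1 - cexp (2 * Real.pi * I * x)).arg = Real.pi * x - Real.pi / 2 := by
    have hs : 0 < Real.sin (Real.pi * x) := Real.sin_pos_of_pos_of_lt_pi (by positivity)
      (by nlinarith [Real.pi_pos])
    have : (1 - cexp (2 * Real.pi * I * x)) = ((2 * Real.sin (Real.pi * x) : ℝ) : ℂ) *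
        (cos ((Real.pi * x - Real.pi / 2 : ℝ):ℂ) + sin ((Real.pi * x - Real.pi / 2 : ℝ):ℂ) * I) := by
      have h : (2 * Real.pi * I * x : ℂ) = (2 * ((Real.pi * x : ℝ):ℂ)) * I := by push_cast; ring
      rw [h, exp_mul_I, cos_two_mul, sin_two_mul, ofReal_sub]
      push_cast
      rw [cos_sub_pi_div_two, sin_sub_pi_div_two]
      linear_combination (-2) * (sin_sq_add_cos_sq ((Real.pi:ℂ) * x))
    rw [this, arg_mul_cos_add_sin_mul_I (by positivity)]
    constructor <;> nlinarith [Real.pi_pos]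
  have e3 : (1 - (starRingEnd ℂ) (cexp (2 * Real.pi * I * x))) =
      (starRingEnd ℂ) (1 - cexp (2 * Real.pi * I * x)) := by simp
  rw [e2, e3, log_conj _ (by rw [harg]; nlinarith [Real.pi_pos])]
  have := sub_conj (log (1 - cexp (2 * Real.pi * I * x)))
  rw [log_im, harg] at this
  push_cast at this
  linear_combination -this

end

section

open Complex Filter Topology Set MeasureTheory

lemma qe_cpow_mul {r : ℝ} (hr : 0 < r) {z : ℂ} (hz : z ≠ 0) (s : ℂ) :
    ((r : ℂ) * z) ^ s = (r : ℂ) ^ s * z ^ s := by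
  have hr' : (r : ℂ) ≠ 0 := by exact_mod_cast hr.ne'
  rw [cpow_def_of_ne_zero (mul_ne_zero hr' hz), cpow_def_of_ne_zero hr', cpow_def_of_ne_zero hz,
    log_ofReal_mul hr hz, ← exp_add, ← ofReal_log hr.le]
  ring_nf

lemma qe_half_sq {y : ℂ} (hy : 0 < y.re) : (y ^ 2) ^ (1 / 2 : ℂ) = y := by
  rw [one_div]; exact sq_cpow_two_inv hy

lemma qe_summable {a : ℂ} (ha : 0 < a.re) (f : ℤ → ℂ) (hf : ∀ n, ‖f n‖ ≤ 1) :
    Summable fun n : ℤ => f n * cexp (-Real.pi * a * (n : ℂ) ^ 2) := by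
  have h := (summable_jacobiTheta₂_term_iff 0 (I * a)).2 (by simpa using ha)
  refine Summable.of_norm_bounded (summable_norm_iff.2 h) (fun n => ?_)
  rw [norm_mul]
  have : (-Real.pi * a * (n : ℂ) ^ 2) =
      (2 * Real.pi * I * n * 0 + Real.pi * I * n ^ 2 * (I * a)) := by
    linear_combination (-Real.pi * a * (n : ℂ) ^ 2) * I_sq
  rw [this, jacobiTheta₂_term]
  exact mul_le_of_le_one_left (norm_nonneg _) (hf n)

lemma qe_class {a : ℂ} (ha : 0 < a.re) {m : ℕ} (hm : 0 < m) (r : ℤ) :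
    a ^ (1 / 2 : ℂ) * ∑' k : ℤ, cexp (-Real.pi * a * ((r : ℂ) + m * k) ^ 2) =
      1 / m * ∑' k : ℤ, cexp (-Real.pi * (1 / a) / m ^ 2 * k ^ 2 + 2 * Real.pi * I * k * r / m) := by
  have ha0 : a ≠ 0 := by rintro rfl; simp at ha
  have hm0 : (m : ℂ) ≠ 0 := by exact_mod_cast hm.ne'
  have hmr : (0:ℝ) < (m:ℝ)^2 := by positivity
  have hA : 0 < ((((m:ℝ)^2 : ℝ) : ℂ) * a).re := by
    rw [re_ofReal_mul]; positivity
  have key := Complex.tsum_exp_neg_quadratic hA (-a * m * r)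
  have hroot : ((((m:ℝ)^2 : ℝ) : ℂ) * a) ^ (1 / 2 : ℂ) = m * a ^ (1 / 2 : ℂ) := by
    rw [qe_cpow_mul hmr ha0]
    congr 1
    push_cast
    exact qe_half_sq (by simpa using hm)
  have hr0 : a ^ (1 / 2 : ℂ) ≠ 0 := by simp [cpow_eq_zero_iff, ha0]
  have e1 : ∀ k : ℤ, cexp (-Real.pi * a * ((r : ℂ) + m * k) ^ 2) = cexp (-Real.pi * a * r ^ 2) *
      cexp (-Real.pi * ((((m:ℝ)^2 : ℝ) : ℂ) * a) * k ^ 2 + 2 * Real.pi * (-a * m * r) * k) := by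
    intro k
    rw [← exp_add]; congr 1; push_cast; ring
  have e2 : ∀ k : ℤ, cexp (-Real.pi * (1 / a) / m ^ 2 * k ^ 2 + 2 * Real.pi * I * k * r / m) =
      cexp (-Real.pi * a * r ^ 2) *
      cexp (-Real.pi / ((((m:ℝ)^2 : ℝ) : ℂ) * a) * (k + I * (-a * m * r)) ^ 2) := by
    intro k
    rw [← exp_add]; congr 1; push_cast
    field_simp
    ring_nf
    rw [I_sq]; ring
  simp_rw [e1, e2]
  rw [tsum_mul_left, tsum_mul_left, key, hroot]
  field_simp

lemma qe_split {a : ℂ} (ha : 0 < a.re) {m : ℕ} (hm : 0 < m) (f : ℤ → ℂ) (hf : ∀ n, ‖f n‖ ≤ 1)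
    (hper : ∀ n k, f (n + m * k) = f n) :
    ∑' n : ℤ, f n * cexp (-Real.pi * a * (n : ℂ) ^ 2) =
      ∑ r ∈ Finset.range m, f r * ∑' k : ℤ, cexp (-Real.pi * a * ((r : ℤ) + m * k : ℂ) ^ 2) := by
  have : NeZero m := ⟨hm.ne'⟩
  have hs := qe_summable ha f hf
  obtain ⟨e, he⟩ : ∃ e : Fin m × ℤ ≃ ℤ, ∀ r k, e (r, k) = ((r : ℕ) : ℤ) + m * k := by
    refine ⟨((Int.divModEquiv m).trans (Equiv.prodComm _ _)).symm, fun r k => ?_⟩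
    simp [Int.divModEquiv]
    ring
  have hs2 : Summable (fun c : Fin m × ℤ => f (e c) * cexp (-Real.pi * a * ((e c : ℤ) : ℂ) ^ 2)) :=
    (Equiv.summable_iff e).2 hs
  rw [← e.tsum_eq (fun n : ℤ => f n * cexp (-Real.pi * a * (n : ℂ) ^ 2)), hs2.tsum_prod,
    tsum_fintype, Finset.sum_range]
  refine Finset.sum_congr rfl (fun r _ => ?_)
  rw [← tsum_mul_left]
  refine tsum_congr (fun k => ?_)
  rw [he, hper, Int.cast_add, Int.cast_mul, Int.cast_natCast m]

lemma qe_one_tendsto {ι : Type*} {l : Filter ι} [l.IsCountablyGenerated] (a : ι → ℂ)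
    (hl : Tendsto (fun i => (1 / a i).re) l atTop) {m : ℕ} (hm : 0 < m) (r : ℤ) :
    Tendsto (fun i => ∑' k : ℤ,
      cexp (-Real.pi * (1 / a i) / m ^ 2 * k ^ 2 + 2 * Real.pi * I * k * r / m)) l (𝓝 1) := by
  have hnorm : ∀ i, ∀ k : ℤ,
      ‖cexp (-Real.pi * (1 / a i) / m ^ 2 * k ^ 2 + 2 * Real.pi * I * k * r / m)‖ =
      Real.exp (-(Real.pi / m ^ 2 * k ^ 2 * (1 / a i).re)) := by
    intro i k
    rw [norm_exp]
    congr 1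
    have h1 : (-Real.pi * (1 / a i) / m ^ 2 * k ^ 2 : ℂ) =
      ((-(Real.pi / m ^ 2 * k ^ 2) : ℝ) : ℂ) * (1 / a i) := by push_cast; ring
    have h2 : (2 * Real.pi * I * k * r / m : ℂ) = ((2 * Real.pi * k * r / m : ℝ) : ℂ) * I := by
      push_cast; ring
    rw [h1, h2, add_re, re_ofReal_mul, re_ofReal_mul, I_re]
    ring
  have hlim : (1 : ℂ) = ∑' k : ℤ, (if k = 0 then 1 else 0) := by simp
  have hmr : (0:ℝ) < (m:ℝ)^2 := by positivity
  refine Eq.mp (congrArg (fun z => Tendsto _ l (𝓝 z)) hlim.symm) ?_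
  refine tendsto_tsum_of_dominated_convergence
    (bound := fun k : ℤ => ‖(1:ℂ) * cexp (-Real.pi * 1 * (k : ℂ) ^ 2)‖)
    (summable_norm_iff.2 (qe_summable (by simp) (fun _ => 1) (by simp))) ?_ ?_
  · intro k
    by_cases hk : k = 0
    · subst hk
      simpa using tendsto_const_nhds
    · simp only [hk, if_false]
      rw [tendsto_zero_iff_norm_tendsto_zero]
      simp_rw [hnorm]
      apply Real.tendsto_exp_neg_atTop_nhds_zero.comp
      have : (0:ℝ) < (k:ℝ)^2 := by positivity
      exact hl.const_mul_atTop (by positivity)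
  · filter_upwards [hl.eventually_ge_atTop ((m:ℝ)^2)] with i hi k
    rw [hnorm, one_mul, norm_exp, Real.exp_le_exp]
    have : (-Real.pi * 1 * (k : ℂ) ^ 2) = ((-(Real.pi * k ^ 2) : ℝ) : ℂ) := by push_cast; ring
    rw [this, ofReal_re, neg_le_neg_iff]
    calc Real.pi * (k:ℝ) ^ 2 = Real.pi / m ^ 2 * k ^ 2 * m ^ 2 := by field_simp
      _ ≤ _ := by gcongr

lemma qe_asymp {ι : Type*} {l : Filter ι} [l.IsCountablyGenerated] (a : ι → ℂ)
    (ha : ∀ᶠ i in l, 0 < (a i).re)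
    (hl : Tendsto (fun i => (1 / a i).re) l atTop) {m : ℕ} (hm : 0 < m)
    (f : ℤ → ℂ) (hf : ∀ n, ‖f n‖ ≤ 1) (hper : ∀ n k, f (n + m * k) = f n) :
    Tendsto (fun i => a i ^ (1 / 2 : ℂ) * ∑' n : ℤ, f n * cexp (-Real.pi * a i * (n : ℂ) ^ 2)) l
      (𝓝 (∑ r ∈ Finset.range m, f r * (1 / m * 1))) := by
  have h : Tendsto (fun i => ∑ r ∈ Finset.range m, f r * (1 / m * ∑' k : ℤ,
      cexp (-Real.pi * (1 / a i) / m ^ 2 * k ^ 2 + 2 * Real.pi * I * k * (r:ℤ) / m))) l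
      (𝓝 (∑ r ∈ Finset.range m, f r * (1 / m * 1))) :=
    tendsto_finsetSum _ (fun r _ => ((qe_one_tendsto a hl hm r).const_mul _).const_mul _)
  refine h.congr' ?_
  filter_upwards [ha] with i hi
  rw [qe_split hi hm f hf hper, Finset.mul_sum]
  refine Finset.sum_congr rfl (fun r _ => ?_)
  rw [← qe_class hi hm]
  ring

lemma qe_gauss (p : ℕ) (h3 : p % 4 = 3) :
    ∑ r ∈ Finset.range p, cexp (2 * Real.pi * I * r ^ 2 / p) = Real.sqrt p * I := by
  have hp : 0 < p := by omega
  have hp0 : (p : ℂ) ≠ 0 := by exact_mod_cast hp.ne'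
  have hpr : (0:ℝ) < p := by exact_mod_cast hp
  set f1 : ℤ → ℂ := fun n => cexp (2 * Real.pi * I * n ^ 2 / p) with hf1
  set f2 : ℤ → ℂ := fun n => cexp (-Real.pi * I * p * n ^ 2 / 2) with hf2
  have n1 : ∀ n, ‖f1 n‖ ≤ 1 := by
    intro n
    have : (2 * Real.pi * I * n ^ 2 / p : ℂ) = ((2 * Real.pi * n ^ 2 / p : ℝ) : ℂ) * I := by
      push_cast; ring
    simp only [hf1]
    rw [this, norm_exp_ofReal_mul_I]
  have n2 : ∀ n, ‖f2 n‖ ≤ 1 := by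
    intro n
    have : (-Real.pi * I * p * n ^ 2 / 2 : ℂ) = ((-Real.pi * p * n ^ 2 / 2 : ℝ) : ℂ) * I := by
      push_cast; ring
    simp only [hf2]
    rw [this, norm_exp_ofReal_mul_I]
  have p1 : ∀ n k, f1 (n + p * k) = f1 n := by
    intro n k
    simp only [hf1]
    rw [exp_eq_exp_iff_exists_int]
    refine ⟨2 * n * k + p * k ^ 2, ?_⟩
    push_cast
    field_simp
    ring
  have p2 : ∀ n k, f2 (n + (2:ℕ) * k) = f2 n := by
    intro n k
    simp only [hf2]
    rw [exp_eq_exp_iff_exists_int]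
    refine ⟨-(p * (n * k + k ^ 2)), ?_⟩
    push_cast
    ring
  set v : ℝ → ℂ := fun ε => 1 / (4 / (p:ℂ) ^ 2 + 2 * I * ε / p) with hv
  set w : ℝ → ℂ := fun ε => ε * v ε with hw
  have hvre : ∀ ε : ℝ, (4 / (p:ℂ) ^ 2 + 2 * I * ε / p).re = 4 / (p:ℝ)^2 := by
    intro ε
    have : (4 / (p:ℂ) ^ 2 + 2 * I * ε / p) = ((4 / (p:ℝ) ^ 2 : ℝ) : ℂ) + ((2 * ε / p : ℝ) : ℂ) * I := by
      push_cast; ring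
    rw [this, add_re, ofReal_re, re_ofReal_mul, I_re, mul_zero, add_zero]
  have hvne : ∀ ε : ℝ, (4 / (p:ℂ) ^ 2 + 2 * I * ε / p) ≠ 0 := by
    intro ε h
    have h2 := hvre ε
    rw [h] at h2
    have : 0 < 4 / (p:ℝ)^2 := by positivity
    rw [← h2] at this
    simp at this
  have hv0 : ∀ ε, v ε ≠ 0 := fun ε => one_div_ne_zero (hvne ε)
  have hvpos : ∀ ε, 0 < (v ε).re := by
    intro ε
    simp only [hv, one_div]
    rw [inv_re, hvre]
    have := normSq_pos.2 (hvne ε)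
    positivity
  have L1 : Tendsto (fun ε : ℝ => (ε:ℂ) ^ (1 / 2 : ℂ) * ∑' n : ℤ, f1 n * cexp (-Real.pi * ε * (n : ℂ) ^ 2))
      (𝓝[>] 0) (𝓝 (∑ r ∈ Finset.range p, f1 r * (1 / p * 1))) := by
    refine qe_asymp (fun ε : ℝ => (ε:ℂ)) ?_ ?_ hp f1 n1 p1
    · filter_upwards [self_mem_nhdsWithin] with ε hε
      simpa using hε
    · have := tendsto_inv_nhdsGT_zero (𝕜 := ℝ)
      refine this.congr (fun ε => ?_)
      rw [one_div, ← ofReal_inv, ofReal_re]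
  have L2 : Tendsto (fun ε : ℝ => (w ε) ^ (1 / 2 : ℂ) * ∑' n : ℤ, f2 n * cexp (-Real.pi * w ε * (n : ℂ) ^ 2))
      (𝓝[>] 0) (𝓝 (∑ r ∈ Finset.range 2, f2 r * (1 / (2:ℕ) * 1))) := by
    refine qe_asymp w ?_ ?_ two_pos f2 n2 p2
    · filter_upwards [self_mem_nhdsWithin] with ε hε
      simp only [hw, re_ofReal_mul]
      exact mul_pos hε (hvpos ε)
    · have := (tendsto_inv_nhdsGT_zero (𝕜 := ℝ)).const_mul_atTop (show 0 < 4 / (p:ℝ)^2 by positivity)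
      refine this.congr (fun ε => ?_)
      have : 1 / w ε = ((ε⁻¹ : ℝ) : ℂ) * (4 / (p:ℂ) ^ 2 + 2 * I * ε / p) := by
        simp only [hw, hv]
        push_cast
        rw [one_div, mul_inv, one_div, inv_inv]
      rw [this, re_ofReal_mul, hvre]
      ring
  have L3 : Tendsto (fun ε : ℝ => 1 / (v ε) ^ (1 / 2 : ℂ)) (𝓝[>] 0) (𝓝 (1 / (v 0) ^ (1 / 2 : ℂ))) := by
    have : ContinuousAt (fun ε : ℝ => 1 / (v ε) ^ (1 / 2 : ℂ)) 0 := by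
      apply ContinuousAt.div continuousAt_const
      · apply ContinuousAt.cpow _ continuousAt_const (Or.inl (hvpos 0))
        exact ContinuousAt.div continuousAt_const (by fun_prop) (hvne 0)
      · simp [cpow_eq_zero_iff, hv0]
    exact this.tendsto.mono_left nhdsWithin_le_nhds
  have L4 : Tendsto (fun ε : ℝ => 1 / ((ε:ℂ) - 2 * I / p) ^ (1 / 2 : ℂ)) (𝓝[>] 0)
      (𝓝 (1 / (((0:ℝ):ℂ) - 2 * I / p) ^ (1 / 2 : ℂ))) := by
    have hs : (((0:ℝ):ℂ) - 2 * I / p) ∈ slitPlane := by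
      right
      have : (((0:ℝ):ℂ) - 2 * I / p) = ((-2 / p : ℝ):ℂ) * I := by push_cast; ring
      rw [this, im_ofReal_mul, I_im]
      simp; omega
    have : ContinuousAt (fun ε : ℝ => 1 / ((ε:ℂ) - 2 * I / p) ^ (1 / 2 : ℂ)) 0 := by
      apply ContinuousAt.div continuousAt_const
      · have hc : ContinuousAt (fun ε : ℝ => ((ε:ℂ) - 2 * I / p)) 0 := by fun_prop
        exact hc.cpow continuousAt_const hs
      · rw [Ne, cpow_eq_zero_iff]
        exact fun h => slitPlane_ne_zero hs h.1
    exact this.tendsto.mono_left nhdsWithin_le_nhds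
  have L5 := (L4.mul (L3.mul L2))
  have heq : ∀ᶠ ε : ℝ in 𝓝[>] 0, 1 / ((ε:ℂ) - 2 * I / p) ^ (1 / 2 : ℂ) * (1 / (v ε) ^ (1 / 2 : ℂ) *
      ((w ε) ^ (1 / 2 : ℂ) * ∑' n : ℤ, f2 n * cexp (-Real.pi * w ε * (n : ℂ) ^ 2))) =
      (ε:ℂ) ^ (1 / 2 : ℂ) * ∑' n : ℤ, f1 n * cexp (-Real.pi * ε * (n : ℂ) ^ 2) := by
    filter_upwards [self_mem_nhdsWithin] with ε hε
    have hε : 0 < ε := hε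
    have hare : ((ε:ℂ) - 2 * I / p).re = ε := by
      have : ((ε:ℂ) - 2 * I / p) = (ε:ℂ) + ((-2 / p : ℝ):ℂ) * I := by push_cast; ring
      rw [this]; simp
    have ha0 : ((ε:ℂ) - 2 * I / p) ≠ 0 := by
      intro h; rw [h] at hare; simp at hare; linarith
    have e1 : ∀ n : ℤ, f1 n * cexp (-Real.pi * ε * (n : ℂ) ^ 2) =
        cexp (-Real.pi * ((ε:ℂ) - 2 * I / p) * (n : ℂ) ^ 2) := by
      intro n
      simp only [hf1]
      rw [← exp_add]; congr 1; ring
    have hinv : 1 / ((ε:ℂ) - 2 * I / p) = w ε + p * I / 2 := by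
      rw [div_eq_iff ha0]
      simp only [hw, hv]
      have := hvne ε
      have h4 : (4 / (p:ℂ) ^ 2 + 2 * I * ε / p) = 2 * I / p * ((ε:ℂ) - 2 * I / p) := by
        field_simp
        ring_nf
        rw [I_sq]; ring
      rw [h4]
      have h5 : 1 / (2 * I / p * ((ε:ℂ) - 2 * I / p)) * ((ε:ℂ) - 2 * I / p) = -(p * I / 2) := by
        rw [one_div, mul_inv, mul_assoc, inv_mul_cancel₀ ha0, mul_one, inv_div,
          div_eq_iff (by simp)]
        linear_combination (p:ℂ) * I_sq
      have h6 : (p:ℂ) * I / 2 * (2 * I / p) = -1 := by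
        field_simp
        exact I_sq
      linear_combination (-(ε:ℂ)) * h5 + h6
    have e2 : ∀ n : ℤ, f2 n * cexp (-Real.pi * w ε * (n : ℂ) ^ 2) =
        cexp (-Real.pi / ((ε:ℂ) - 2 * I / p) * (n : ℂ) ^ 2) := by
      intro n
      simp only [hf2]
      rw [← exp_add]; congr 1
      linear_combination (Real.pi * (n:ℂ)^2) * hinv
    simp_rw [e1, e2]
    rw [Complex.tsum_exp_neg_mul_int_sq (by rw [hare]; exact hε)]
    have hvr : (v ε) ^ (1 / 2 : ℂ) ≠ 0 := by simp [cpow_eq_zero_iff, hv0]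
    have hwr : (w ε) ^ (1 / 2 : ℂ) = (ε:ℂ) ^ (1 / 2 : ℂ) * (v ε) ^ (1 / 2 : ℂ) :=
      qe_cpow_mul hε (hv0 ε) _
    rw [hwr]
    field_simp
  have L6 := tendsto_nhds_unique (L5.congr' heq) L1
  have hv00 : (v 0) ^ (1 / 2 : ℂ) = p / 2 := by
    have : v 0 = ((p:ℂ) / 2) ^ 2 := by
      simp only [hv]; push_cast; field_simp; ring
    rw [this]
    apply qe_half_sq
    have : ((p:ℂ) / 2) = ((p / 2 : ℝ):ℂ) := by push_cast; ring
    rw [this, ofReal_re]; positivity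
  have hsq : ((Real.sqrt p : ℝ) : ℂ) ^ 2 = p := by
    norm_cast; exact Real.sq_sqrt hpr.le
  have hsp : 0 < Real.sqrt p := Real.sqrt_pos.2 hpr
  have hs0 : ((Real.sqrt p : ℝ) : ℂ) ≠ 0 := by exact_mod_cast hsp.ne'
  have ha00 : (((0:ℝ):ℂ) - 2 * I / p) ^ (1 / 2 : ℂ) = (1 - I) / Real.sqrt p := by
    have : (((0:ℝ):ℂ) - 2 * I / p) = ((1 - I) / Real.sqrt p) ^ 2 := by
      rw [div_pow, hsq]; push_cast; ring_nf; rw [I_sq]; ring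
    rw [this]
    apply qe_half_sq
    rw [div_ofReal_re]; simp; omega
  have hf20 : f2 ((0:ℕ):ℤ) = 1 := by simp [hf2]
  have hf21 : f2 ((1:ℕ):ℤ) = I := by
    simp only [hf2]
    obtain ⟨q, hq⟩ : ∃ q, p = 4 * q + 3 := ⟨p / 4, by omega⟩
    have hqC : (p:ℂ) = 4 * q + 3 := by rw [hq]; push_cast; ring
    have h2 : cexp (Real.pi / 2 * I) = I := by
      rw [exp_mul_I]; simp
    refine Eq.trans ?_ h2
    rw [exp_eq_exp_iff_exists_int]
    refine ⟨-((q : ℤ) + 1), ?_⟩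
    rw [hqC]
    push_cast
    ring
  rw [hv00, ha00, Finset.sum_range_succ, Finset.sum_range_one, hf20, hf21, ← Finset.sum_mul] at L6
  have h1I : (1 - I) ≠ 0 := by
    intro h; have := congrArg re h; simp at this
  have hfin : ∑ r ∈ Finset.range p, f1 r = Real.sqrt p * I := by
    push_cast at L6
    field_simp at L6
    have h' : (1 - I) * (∑ r ∈ Finset.range p, f1 r) = (1 - I) * (Real.sqrt p * I) := by
      rw [← L6]; ring_nf; try simp only [I_sq]; try ring
    exact mul_left_cancel₀ h1I h'
  rw [← hfin]
  refine Finset.sum_congr rfl (fun r _ => ?_)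
  simp [hf1]

end

section

open Complex Filter Topology Set MeasureTheory HurwitzZeta

lemma qe_sum_zmod {M : Type*} [AddCommMonoid M] (p : ℕ) [NeZero p] (F : ZMod p → M) :
    ∑ j, F j = ∑ r ∈ Finset.range p, F (r : ZMod p) := by
  refine Finset.sum_bij' (fun j _ => j.val) (fun r _ => (r : ZMod p)) ?_ ?_ ?_ ?_ ?_
  · intro j _; simpa using ZMod.val_lt j
  · simp
  · intro j _; simp
  · intro r hr; exact ZMod.val_cast_of_lt (by simpa using hr)
  · intro j _; simp

lemma qe_chi_neg (p : ℕ) [hp : Fact p.Prime] (h3 : p % 4 = 3) (j : ZMod p) :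
    quadraticChar (ZMod p) (-j) = - quadraticChar (ZMod p) j := by
  have h : quadraticChar (ZMod p) (-1) = -1 := by
    rw [quadraticChar_neg_one (by rw [ZMod.ringChar_zmod_n]; omega), ZMod.card,
      ZMod.χ₄_nat_three_mod_four h3]
  rw [neg_eq_neg_one_mul, map_mul, h, neg_one_mul]

lemma qe_gaussSum (p : ℕ) [hp : Fact p.Prime] (h3 : p % 4 = 3) :
    gaussSum ((quadraticChar (ZMod p)).ringHomComp (Int.castRingHom ℂ))
      (ZMod.stdAddChar (N := p)) = Real.sqrt p * I := by
  have hp2 : ringChar (ZMod p) ≠ 2 := by rw [ZMod.ringChar_zmod_n]; omega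
  have h1 : ∑ x : ZMod p, ZMod.stdAddChar (x ^ 2) = (Real.sqrt p * I : ℂ) := by
    rw [← qe_gauss p h3, qe_sum_zmod]
    refine Finset.sum_congr rfl (fun r _ => ?_)
    have := ZMod.stdAddChar_coe (N := p) ((r : ℤ) ^ 2)
    push_cast at this
    exact this
  have h0 : ∑ y : ZMod p, ZMod.stdAddChar y = (0 : ℂ) := by
    apply AddChar.sum_eq_zero_of_ne_one
    have := ZMod.isPrimitive_stdAddChar p (one_ne_zero)
    simpa using this
  rw [← h1, ← Finset.sum_fiberwise (Finset.univ) (fun x : ZMod p => x ^ 2), gaussSum,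
    ← add_zero (∑ a, _), ← h0, ← Finset.sum_add_distrib]
  refine Finset.sum_congr rfl (fun y _ => ?_)
  have h2 : ∑ x ∈ Finset.univ with x ^ 2 = y, (ZMod.stdAddChar (x ^ 2) : ℂ) =
      ∑ x ∈ Finset.univ with x ^ 2 = y, (ZMod.stdAddChar y : ℂ) := by
    refine Finset.sum_congr rfl (fun x hx => ?_)
    rw [(Finset.mem_filter.1 hx).2]
  have h4 := quadraticChar_card_sqrts hp2 y
  have h5 : {x : ZMod p | x ^ 2 = y}.toFinset = Finset.univ.filter (fun x => x ^ 2 = y) := by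
    ext; simp
  rw [h5] at h4
  rw [h2, Finset.sum_const, nsmul_eq_mul]
  have h6 : (((Finset.univ.filter (fun x : ZMod p => x ^ 2 = y)).card : ℕ) : ℂ) =
    (quadraticChar (ZMod p) y : ℂ) + 1 := by exact_mod_cast congrArg (Int.cast : ℤ → ℂ) h4
  rw [h6]
  simp [MulChar.ringHomComp_apply]
  ring

lemma qe_dft (p : ℕ) [hp : Fact p.Prime] (h3 : p % 4 = 3) (k : ZMod p) :
    ZMod.dft (fun j : ZMod p => (quadraticChar (ZMod p) j : ℂ)) k =
      -(Real.sqrt p * I) * (quadraticChar (ZMod p) k : ℂ) := by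
  have hp2 : ringChar (ZMod p) ≠ 2 := by rw [ZMod.ringChar_zmod_n]; omega
  have h := DirichletCharacter.fourierTransform_eq_gaussSum_mulShift
    ((quadraticChar (ZMod p)).ringHomComp (Int.castRingHom ℂ)) k
  have h' : ((quadraticChar (ZMod p)).ringHomComp (Int.castRingHom ℂ) : ZMod p → ℂ) =
    fun j : ZMod p => (quadraticChar (ZMod p) j : ℂ) := by
    ext j; simp [MulChar.ringHomComp_apply]
  rw [h'] at h
  refine h.trans ?_
  by_cases hk : k = 0
  · subst hk
    have hs := quadraticChar_sum_zero hp2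
    simp [gaussSum, MulChar.ringHomComp_apply]
    exact_mod_cast hs
  · have hu : IsUnit (-k) := (neg_ne_zero.2 hk).isUnit
    have h2 := gaussSum_mulShift ((quadraticChar (ZMod p)).ringHomComp (Int.castRingHom ℂ))
      (ZMod.stdAddChar (N := p)) hu.unit
    rw [hu.unit_spec, qe_gaussSum p h3] at h2
    have h4 : ((quadraticChar (ZMod p)).ringHomComp (Int.castRingHom ℂ)) (-k) =
      -(quadraticChar (ZMod p) k : ℂ) := by
      rw [MulChar.ringHomComp_apply, qe_chi_neg p h3]; simp
    have h5 : (quadraticChar (ZMod p) k : ℂ) ^ 2 = 1 := by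
      exact_mod_cast quadraticChar_sq_one hk
    rw [h4] at h2
    rw [← h2]
    linear_combination (-(gaussSum ((quadraticChar (ZMod p)).ringHomComp (Int.castRingHom ℂ)) (AddChar.mulShift ZMod.stdAddChar (-k)))) * h5

lemma qe_L_one (p : ℕ) [hp : Fact p.Prime] (h3 : p % 4 = 3) :
    Real.sqrt p * p * DirichletCharacter.LFunction
          ((quadraticChar (ZMod p)).ringHomComp (Int.castRingHom ℂ)) 1 =
      -Real.pi * ((∑ n ∈ Finset.range p, (n : ℤ) * legendreSym p n : ℤ) : ℂ) := by
  have hp2 : ringChar (ZMod p) ≠ 2 := by rw [ZMod.ringChar_zmod_n]; omega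
  have hp0 : (p : ℂ) ≠ 0 := by exact_mod_cast hp.out.ne_zero
  set χ : ZMod p → ℂ := fun j : ZMod p => (quadraticChar (ZMod p) j : ℂ) with hχ
  have h' : ((quadraticChar (ZMod p)).ringHomComp (Int.castRingHom ℂ) : ZMod p → ℂ) = χ := by
    ext j; simp [hχ, MulChar.ringHomComp_apply]
  rw [DirichletCharacter.LFunction, h']
  have hd : ZMod.dft χ = fun k => -(Real.sqrt p * I) * χ k := by
    ext k; exact qe_dft p h3 k
  have h0 : χ 0 = 0 := by simp [hχ]
  have hneg : ∀ j, χ (-j) = - χ j := by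
    intro j; simp only [hχ]; rw [qe_chi_neg p h3]; push_cast; rfl
  have hA := ZMod.LFunction_dft χ (s := 1) (Or.inl h0)
  have hlin : ZMod.LFunction (fun k => -(Real.sqrt p * I) * χ k) 1 =
      -(Real.sqrt p * I) * ZMod.LFunction χ 1 := by
    simp only [ZMod.LFunction, Finset.mul_sum]
    refine Finset.sum_congr rfl (fun j _ => ?_)
    ring
  rw [hd, hlin] at hA
  have hB : ∑ j : ZMod p, χ j * expZeta (ZMod.toAddCircle (-j)) 1 =
      -∑ j : ZMod p, χ j * expZeta (ZMod.toAddCircle j) 1 := by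
    rw [← Equiv.sum_comp (Equiv.neg (ZMod p)), ← Finset.sum_neg_distrib]
    refine Finset.sum_congr rfl (fun j _ => ?_)
    rw [Equiv.neg_apply, hneg, neg_neg, neg_mul]
  have hC : ∑ j : ZMod p, χ j * expZeta (ZMod.toAddCircle j) 1 -
      ∑ j : ZMod p, χ j * expZeta (ZMod.toAddCircle (-j)) 1 =
      ∑ j : ZMod p, χ j * (2 * Real.pi * I * (1 / 2 - (j.val : ℂ) / p)) := by
    rw [← Finset.sum_sub_distrib]
    refine Finset.sum_congr rfl (fun j _ => ?_)
    by_cases hj : j = 0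
    · rw [hj, h0]; simp
    · have hv : 0 < j.val := by
        rw [Nat.pos_iff_ne_zero, Ne, ZMod.val_eq_zero]; exact hj
      have hpr : (0:ℝ) < p := by exact_mod_cast hp.out.pos
      have := qe_expZeta_sub (x := (j.val : ℝ) / p) (by positivity)
        (by rw [div_lt_one hpr]; exact_mod_cast ZMod.val_lt j)
      rw [map_neg, ZMod.toAddCircle_apply, ← mul_sub, this]
      push_cast
      ring
  have hS : ∑ j : ZMod p, χ j = 0 := by
    have hs := quadraticChar_sum_zero hp2
    simp only [hχ]
    exact_mod_cast hs
  have hD : ∑ j : ZMod p, χ j * (2 * Real.pi * I * (1 / 2 - (j.val : ℂ) / p)) =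
      -(2 * Real.pi * I) / p * ∑ j : ZMod p, (j.val : ℂ) * χ j := by
    have : ∀ j : ZMod p, χ j * (2 * Real.pi * I * (1 / 2 - (j.val : ℂ) / p)) =
      Real.pi * I * χ j + -(2 * Real.pi * I) / p * ((j.val : ℂ) * χ j) := by
      intro j; ring
    simp_rw [this]
    rw [Finset.sum_add_distrib, ← Finset.mul_sum, ← Finset.mul_sum, hS]
    ring
  have hE : ∑ j : ZMod p, (j.val : ℂ) * χ j =
      ((∑ n ∈ Finset.range p, (n : ℤ) * legendreSym p n : ℤ) : ℂ) := by
    rw [qe_sum_zmod]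
    push_cast
    refine Finset.sum_congr rfl (fun r hr => ?_)
    rw [ZMod.val_cast_of_lt (by simpa using hr)]
    simp [hχ, legendreSym]
  rw [hD, hE] at hC
  generalize ((∑ n ∈ Finset.range p, (n : ℤ) * legendreSym p n : ℤ) : ℂ) = T at *
  have hI : 2 * I * (Real.sqrt p * p * ZMod.LFunction χ 1) = 2 * I * (-Real.pi * T) := by
    have hF : -(2 * Real.pi * I) / p * T * p = -(2 * Real.pi * I) * T := by field_simp
    linear_combination (-2 * p) * hA - p * hB + p * hC + hF
  exact mul_left_cancel₀ (by simp) hI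

lemma qe_sum_first (h : ℕ) (g : ℕ → ℤ) : ∑ n ∈ Finset.range (2 * h + 1), g n =
    g 0 + ∑ i ∈ Finset.range h, (g (i + 1) + g (2 * h + 1 - (i + 1))) := by
  rw [Finset.sum_range_succ', two_mul, Finset.sum_range_add, Finset.sum_add_distrib, add_comm,
    ← Finset.sum_range_reflect (fun x => g (h + x + 1)) h]
  congr 2
  refine Finset.sum_congr rfl (fun i hi => ?_)
  have := Finset.mem_range.1 hi
  congr 1; omega

lemma qe_sum_second (h : ℕ) (g : ℕ → ℤ) : ∑ n ∈ Finset.range (2 * h + 1), g n =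
    g 0 + ∑ i ∈ Finset.range h, (g (2 * (i + 1)) + g (2 * h + 1 - 2 * (i + 1))) := by
  have h1 : ∑ n ∈ Finset.range (2 * h + 1), g n =
    g 0 + (∑ i ∈ Finset.range h, g (2 * (i + 1)) + ∑ i ∈ Finset.range h, g (2 * i + 1)) := by
    induction h with
    | zero => simp
    | succ k ih =>
      rw [show 2 * (k + 1) + 1 = 2 * k + 1 + 1 + 1 by ring, Finset.sum_range_succ,
        Finset.sum_range_succ, ih, Finset.sum_range_succ, Finset.sum_range_succ,
        show 2 * (k + 1) = 2 * k + 1 + 1 by ring]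
      ring
  rw [h1, Finset.sum_add_distrib, ← Finset.sum_range_reflect (fun i => g (2 * i + 1)) h]
  congr 2
  refine Finset.sum_congr rfl (fun i hi => ?_)
  have := Finset.mem_range.1 hi
  congr 1; omega

lemma qe_finite (p : ℕ) [hp : Fact p.Prime] (h3 : p % 4 = 3) :
    (2 - legendreSym p 2) * ∑ n ∈ Finset.range p, (n : ℤ) * legendreSym p n =
      -(p * ∑ n ∈ (Finset.range p).filter (fun n : ℕ => 0 < n ∧ (n : ℚ) < (p : ℚ) / 2),
        legendreSym p (n : ℤ)) := by
  obtain ⟨h, hh⟩ : ∃ h, p = 2 * h + 1 := ⟨p / 2, by omega⟩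
  have hS : ∑ n ∈ (Finset.range p).filter (fun n : ℕ => 0 < n ∧ (n : ℚ) < (p : ℚ) / 2),
        legendreSym p (n : ℤ) = ∑ i ∈ Finset.range h, legendreSym p ((i + 1 : ℕ) : ℤ) := by
    symm
    refine Finset.sum_bij' (fun i _ => i + 1) (fun n _ => n - 1) ?_ ?_ ?_ ?_ ?_
    · intro i hi
      have := Finset.mem_range.1 hi
      rw [Finset.mem_filter, Finset.mem_range]
      refine ⟨by omega, by omega, ?_⟩
      rw [lt_div_iff₀ (by norm_num)]
      have : (i + 1) * 2 < p := by omega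
      exact_mod_cast this
    · intro n hn
      rw [Finset.mem_filter, lt_div_iff₀ (by norm_num)] at hn
      have : n * 2 < p := by exact_mod_cast hn.2.2
      have := hn.2.1
      rw [Finset.mem_range]; omega
    · intro i _; simp
    · intro n hn
      have := (Finset.mem_filter.1 hn).2.1
      show n - 1 + 1 = n
      omega
    · intro i _; rfl
  rw [hS]
  have hrefl : ∀ m : ℕ, m ≤ p → legendreSym p ((p - m : ℕ) : ℤ) = - legendreSym p (m : ℤ) := by
    intro m hm
    have := qe_chi_neg p h3 (m : ZMod p)
    simp only [legendreSym]
    push_cast [Nat.cast_sub hm]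
    rw [← this]
    simp
  have h2 : legendreSym p 2 ^ 2 = 1 := by
    apply legendreSym.sq_one
    intro h
    have h' : ((2 : ℕ) : ZMod p) = 0 := by exact_mod_cast h
    rw [ZMod.natCast_eq_zero_iff] at h'
    have := Nat.le_of_dvd (by norm_num) h'
    have : p = 2 ∨ p = 1 ∨ p = 0 := by omega
    omega
  have hmul : ∀ m : ℕ, legendreSym p ((2 * m : ℕ) : ℤ) = legendreSym p 2 * legendreSym p (m : ℤ) := by
    intro m; push_cast; exact legendreSym.mul p 2 m
  set U := ∑ i ∈ Finset.range h, ((i + 1 : ℕ) : ℤ) * legendreSym p ((i + 1 : ℕ) : ℤ) with hU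
  set S := ∑ i ∈ Finset.range h, legendreSym p ((i + 1 : ℕ) : ℤ) with hSS
  have T1 : ∑ n ∈ Finset.range p, (n : ℤ) * legendreSym p n = 2 * U - p * S := by
    have := qe_sum_first h (fun n => (n : ℤ) * legendreSym p n)
    rw [← hh] at this
    rw [this, hU, hSS, Finset.mul_sum, Finset.mul_sum, ← Finset.sum_sub_distrib, Nat.cast_zero,
      zero_mul, zero_add]
    refine Finset.sum_congr rfl (fun i hi => ?_)
    have := Finset.mem_range.1 hi
    rw [hrefl _ (by omega), Nat.cast_sub (by omega)]
    ring
  have T2 : ∑ n ∈ Finset.range p, (n : ℤ) * legendreSym p n =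
      legendreSym p 2 * (4 * U - p * S) := by
    have := qe_sum_second h (fun n => (n : ℤ) * legendreSym p n)
    rw [← hh] at this
    rw [this, hU, hSS, Finset.mul_sum, Finset.mul_sum, ← Finset.sum_sub_distrib, Finset.mul_sum,
      Nat.cast_zero, zero_mul, zero_add]
    refine Finset.sum_congr rfl (fun i hi => ?_)
    have := Finset.mem_range.1 hi
    rw [hrefl _ (by omega), Nat.cast_sub (by omega), hmul]
    push_cast
    ring
  linear_combination 2 * T1 - legendreSym p 2 * T2 - (4 * U - p * S) * h2

end

theorem quadratic_excess_half_eq (p : ℕ) [hp : Fact p.Prime] (h3 : p % 4 = 3) :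
    (((∑ n ∈ (Finset.range p).filter (fun n : ℕ => 0 < n ∧ (n : ℚ) < (p : ℚ) / 2),
        legendreSym p (n : ℤ) : ℤ)) : ℂ)
      = ((Real.sqrt p / Real.pi : ℝ) : ℂ) * ((2 : ℂ) - ((legendreSym p 2 : ℤ) : ℂ)) *
        DirichletCharacter.LFunction
          ((quadraticChar (ZMod p)).ringHomComp (Int.castRingHom ℂ)) 1 := by
  have hL := qe_L_one p h3
  have hF := congrArg (Int.cast : ℤ → ℂ) (qe_finite p h3)
  rw [Int.cast_mul, Int.cast_neg, Int.cast_mul, Int.cast_sub, Int.cast_natCast, Int.cast_ofNat] at hF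
  have hp0 : (p : ℂ) ≠ 0 := by exact_mod_cast hp.out.ne_zero
  have hpi : (Real.pi : ℂ) ≠ 0 := by exact_mod_cast Real.pi_ne_zero
  rw [Complex.ofReal_div]
  generalize ((∑ n ∈ (Finset.range p).filter (fun n : ℕ => 0 < n ∧ (n : ℚ) < (p : ℚ) / 2),
        legendreSym p (n : ℤ) : ℤ) : ℂ) = S at *
  generalize ((∑ n ∈ Finset.range p, (n : ℤ) * legendreSym p n : ℤ) : ℂ) = T at *
  generalize DirichletCharacter.LFunction
          ((quadraticChar (ZMod p)).ringHomComp (Int.castRingHom ℂ)) 1 = L at *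
  generalize ((legendreSym p 2 : ℤ) : ℂ) = c at *
  field_simp
  apply mul_left_cancel₀ hp0
  linear_combination (Real.pi : ℂ) * hF - (2 - c) * hL
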